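/- arXiv:1911.00794 — 7 statements merged into one kernel-verified Lean document; each statement's English description precedes it below -/
import Mathlib

section
/- Let k, n ≥ 1, let g be a 2k×2k real matrix, let M be an invertible n×n real matrix, let j : Fin 2k → Fin n and l : Fin n → Fin 2k, let V be the 2k×n matrix with i-th row equal to the j(i)-th row of M, and let G be the n×2k matrix with a-th row equal to the l(a)-th row of g. Then det [[g, −V], [G, M]] = det(M) · det(g′), where g′ is the 2k×2k matrix whose i-th row is g i + g (l(j(i))), i.e. g′ is obtained from g by adding to each row i the row l(j(i)) of g. -/
/-- With `V` the 2k×n matrix whose i-th row is row `j i` of an invertible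
matrix `M`, and `G` the n×2k matrix whose a-th row is row `l a` of `g`, the
determinant of the block matrix `[[g, −V], [G, M]]` equals `det M · det g′`,
where `g′` is obtained from `g` by adding row `l (j i)` of `g` to each row `i`. -/
theorem bordered_block_det (k n : ℕ) (hk : 1 ≤ k) (hn : 1 ≤ n)
    (g : Matrix (Fin (2 * k)) (Fin (2 * k)) ℝ)
    (M : Matrix (Fin n) (Fin n) ℝ) (hM : IsUnit M.det)
    (j : Fin (2 * k) → Fin n) (l : Fin n → Fin (2 * k))
    (V : Matrix (Fin (2 * k)) (Fin n) ℝ) (hV : ∀ i, V i = M (j i))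
    (G : Matrix (Fin n) (Fin (2 * k)) ℝ) (hG : ∀ a, G a = g (l a)) :
    (Matrix.fromBlocks g (-V) G M).det =
      M.det * (Matrix.of fun i w => g i w + g (l (j i)) w).det := by
  have := Matrix.invertibleOfIsUnitDet M hM
  rw [Matrix.det_fromBlocks₂₂]
  have hP : V = (1 : Matrix (Fin n) (Fin n) ℝ).submatrix j id * M := by
    ext i w
    simp [hV, Matrix.mul_apply, Matrix.one_apply]
  have h : g - -V * ⅟M * G = Matrix.of fun i w => g i w + g (l (j i)) w := by
    rw [Matrix.neg_mul, Matrix.neg_mul, sub_neg_eq_add, hP, Matrix.mul_assoc _ M, mul_invOf_self,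
      Matrix.mul_one]
    ext i w
    simp [Matrix.mul_apply, Matrix.one_apply, hG]
  rw [h]
end

section
/- Let k ≥ 1, let M and N be k×k real matrices, let a, b, r ∈ ℝ^k, and let B be the (2k+1)×(2k+1) bordered block matrix B = [[M, M, −a], [−N, N, −b], [rᵀ, rᵀ, 1]]. Then det B = 2^k · det(M + a·rᵀ) · det(N), where a·rᵀ is the k×k outer-product matrix with (i,l) entry a_i·r_l. -/
/-- The bordered (2k+1)×(2k+1) matrix `[[M, M, −a], [−N, N, −b], [rᵀ, rᵀ, 1]]`
has determinant `2^k · det(M + a·rᵀ) · det N`. -/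
theorem bordered_det_plus (k : ℕ) (hk : 1 ≤ k) (M N : Matrix (Fin k) (Fin k) ℝ)
    (a b r : Fin k → ℝ) :
    (Matrix.fromBlocks (Matrix.fromBlocks M M (-N) N)
        (Matrix.of fun i (_ : Fin 1) => Sum.elim (fun s => -a s) (fun s => -b s) i)
        (Matrix.of fun (_ : Fin 1) w => Sum.elim r r w)
        (1 : Matrix (Fin 1) (Fin 1) ℝ)).det =
      2 ^ k * (M + Matrix.vecMulVec a r).det * N.det := by
  rw [Matrix.det_fromBlocks_one₂₂]
  have key : Matrix.fromBlocks M M (-N) N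
        - (Matrix.of fun i (_ : Fin 1) => Sum.elim (fun s => -a s) (fun s => -b s) i)
          * (Matrix.of fun (_ : Fin 1) w => Sum.elim r r w)
      = Matrix.fromBlocks (M + Matrix.vecMulVec a r) 0 (Matrix.vecMulVec b r - N) ((2 : ℝ) • N)
        * Matrix.fromBlocks 1 1 0 1 := by
    rw [Matrix.fromBlocks_multiply]
    ext i j
    rcases i with i | i <;> rcases j with j | j <;>
      simp [Matrix.mul_apply, Matrix.vecMulVec_apply] <;> ring
  rw [key, Matrix.det_mul, Matrix.det_fromBlocks_zero₁₂, Matrix.det_fromBlocks_zero₂₁,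
    Matrix.det_smul]
  simp
  ring
end

section
/- Let k ≥ 1, let M and N be k×k real matrices, let a, b, r ∈ ℝ^k, and let B be the (2k+1)×(2k+1) bordered block matrix B = [[M, M, −a], [−N, N, −b], [−rᵀ, rᵀ, 1]]. Then det B = 2^k · det(M) · det(N + b·rᵀ), where b·rᵀ is the k×k outer-product matrix with (i,l) entry b_i·r_l. -/
/-- The bordered (2k+1)×(2k+1) matrix `[[M, M, −a], [−N, N, −b], [−rᵀ, rᵀ, 1]]`
has determinant `2^k · det M · det(N + b·rᵀ)`. -/
theorem bordered_det_minus (k : ℕ) (hk : 1 ≤ k) (M N : Matrix (Fin k) (Fin k) ℝ)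
    (a b r : Fin k → ℝ) :
    (Matrix.fromBlocks (Matrix.fromBlocks M M (-N) N)
        (Matrix.of fun i (_ : Fin 1) => Sum.elim (fun s => -a s) (fun s => -b s) i)
        (Matrix.of fun (_ : Fin 1) w => Sum.elim (fun s => -r s) r w)
        (1 : Matrix (Fin 1) (Fin 1) ℝ)).det =
      2 ^ k * M.det * (N + Matrix.vecMulVec b r).det := by
  rw [Matrix.det_fromBlocks_one₂₂]
  have h1 : (Matrix.fromBlocks M M (-N) N -
      (Matrix.of fun i (_ : Fin 1) => Sum.elim (fun s => -a s) (fun s => -b s) i) *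
        (Matrix.of fun (_ : Fin 1) w => Sum.elim (fun s => -r s) r w)) =
      Matrix.fromBlocks (M - Matrix.vecMulVec a r) (M + Matrix.vecMulVec a r)
        (-(N + Matrix.vecMulVec b r)) (N + Matrix.vecMulVec b r) := by
    ext i j
    rcases i with i | i <;> rcases j with j | j <;>
      simp [Matrix.mul_apply, Matrix.vecMulVec_apply] <;> ring
  have h2 : Matrix.fromBlocks (M - Matrix.vecMulVec a r) (M + Matrix.vecMulVec a r)
        (-(N + Matrix.vecMulVec b r)) (N + Matrix.vecMulVec b r) *
      Matrix.fromBlocks 1 0 1 1 =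
      Matrix.fromBlocks ((2 : ℝ) • M) (M + Matrix.vecMulVec a r) 0
        (N + Matrix.vecMulVec b r) := by
    rw [Matrix.fromBlocks_multiply]
    congr 1 <;> simp [two_smul]
  have h3 := congrArg Matrix.det h2
  rw [Matrix.det_mul, Matrix.det_fromBlocks_zero₁₂, Matrix.det_fromBlocks_zero₂₁,
    Matrix.det_smul] at h3
  simp only [Matrix.det_one, mul_one, Fintype.card_fin] at h3
  exact (congrArg Matrix.det h1).trans h3
end

section
/- Let k ≥ 1. Let M, N ∈ M_k{−1,1}, let r ∈ {−1,1}^k with first entry r_1 = 1, let a, b ∈ {−1,1}^k, and let ε ∈ {−1, 1}. Let B be the (2k+1)×(2k+1) bordered block matrix B = [[M, M, −a], [−N, N, −b], [ε·rᵀ, rᵀ, 1]]. Then |det B| ≤ 2^k · Θ_k · Θ_{k+1}. -/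
/-- `Mset k hk` is the set of k×k real matrices with all entries in {−1, 1}
whose first column is all ones. -/
def Mset (k : ℕ) (hk : 0 < k) : Set (Matrix (Fin k) (Fin k) ℝ) :=
  {A | (∀ i j, A i j = 1 ∨ A i j = -1) ∧ ∀ i, A i ⟨0, hk⟩ = 1}

/-- `Theta k hk` is the maximum of `|det A|` over `A ∈ Mset k hk`. -/
noncomputable def Theta (k : ℕ) (hk : 0 < k) : ℝ :=
  sSup ((fun A : Matrix (Fin k) (Fin k) ℝ => |A.det|) '' Mset k hk)

open Matrix in
lemma core_aux {k : ℕ} (P Q : Matrix (Fin k) (Fin k) ℝ) (c d r : Fin k → ℝ) (δ : ℝ)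
    (hδ : δ = 1 ∨ δ = -1) :
    |(Matrix.fromBlocks (-δ • P)
      (Matrix.of fun i (w : Fin k ⊕ Fin 1) => Sum.elim (fun j => P i j) (fun _ => c i) w)
      (Matrix.of fun (w : Fin k ⊕ Fin 1) j => Sum.elim (fun i => δ * Q i j) (fun _ => δ * r j) w)
      (Matrix.fromBlocks Q (Matrix.of fun i (_ : Fin 1) => d i)
        (Matrix.of fun (_ : Fin 1) j => r j) (1 : Matrix (Fin 1) (Fin 1) ℝ))).det|
    = 2 ^ k * |P.det| * |(Matrix.fromBlocks Q (Matrix.of fun i (_ : Fin 1) => d i)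
        (Matrix.of fun (_ : Fin 1) j => r j) (1 : Matrix (Fin 1) (Fin 1) ℝ)).det| := by
  set U := (Matrix.of fun i (w : Fin k ⊕ Fin 1) => Sum.elim (fun j => P i j) (fun _ => c i) w) with hU
  set V := (Matrix.of fun (w : Fin k ⊕ Fin 1) j =>
    Sum.elim (fun i => δ * Q i j) (fun _ => δ * r j) w) with hV
  set Y := (Matrix.fromBlocks Q (Matrix.of fun i (_ : Fin 1) => d i)
        (Matrix.of fun (_ : Fin 1) j => r j) (1 : Matrix (Fin 1) (Fin 1) ℝ)) with hY
  let L : Matrix (Fin k ⊕ Fin 1) (Fin k) ℝ := Matrix.fromRows (-δ • 1) 0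
  have h1 : Matrix.fromBlocks (-δ • P) U V Y * Matrix.fromBlocks 1 0 L 1
      = Matrix.fromBlocks ((-2 * δ) • P) U 0 Y := by
    rw [Matrix.fromBlocks_multiply]
    congr 1
    · ext i j
      simp [L, hU, Matrix.mul_apply, Fintype.sum_sum_type, Matrix.one_apply]
      ring
    · simp
    · ext i j
      rcases i with i | i <;>
      simp [L, hV, hY, Matrix.mul_apply, Fintype.sum_sum_type, Matrix.one_apply] <;> ring
    · simp
  have h2 := congrArg Matrix.det h1
  rw [Matrix.det_mul, Matrix.det_fromBlocks_zero₁₂, Matrix.det_fromBlocks_zero₂₁] at h2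
  simp only [Matrix.det_one, mul_one, Matrix.det_smul, Fintype.card_fin] at h2
  rw [h2, abs_mul, abs_mul, abs_pow]
  rcases hδ with rfl | rfl <;> simp

lemma le_Theta_aux {k : ℕ} (hk : 0 < k) (A : Matrix (Fin k) (Fin k) ℝ) (hA : A ∈ Mset k hk) :
    |A.det| ≤ Theta k hk := by
  refine le_csSup ⟨((Fintype.card (Fin k)).factorial • (1 : ℝ) ^ Fintype.card (Fin k)), ?_⟩ ⟨A, hA, rfl⟩
  rintro _ ⟨B, hB, rfl⟩
  refine Matrix.det_le (abv := AbsoluteValue.abs) (fun i j => ?_)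
  rcases hB.1 i j with h | h <;> simp [h]

lemma bordered_aux {k : ℕ} (hk : 0 < k) (Q : Matrix (Fin k) (Fin k) ℝ) (hQ : Q ∈ Mset k hk)
    (d r : Fin k → ℝ) (hd : ∀ i, d i = 1 ∨ d i = -1)
    (hr : ∀ i, r i = 1 ∨ r i = -1) (hr0 : r ⟨0, hk⟩ = 1) :
    |(Matrix.fromBlocks Q (Matrix.of fun i (_ : Fin 1) => d i)
        (Matrix.of fun (_ : Fin 1) j => r j) (1 : Matrix (Fin 1) (Fin 1) ℝ)).det|
      ≤ Theta (k + 1) k.succ_pos := by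
  rw [← Matrix.abs_det_submatrix_equiv_equiv finSumFinEquiv.symm finSumFinEquiv.symm]
  apply le_Theta_aux
  have h0 : finSumFinEquiv.symm (⟨0, k.succ_pos⟩ : Fin (k+1)) = Sum.inl ⟨0, hk⟩ := by
    rw [Equiv.symm_apply_eq]; ext; simp
  refine ⟨fun i j => ?_, fun i => ?_⟩
  · simp only [Matrix.submatrix_apply]
    rcases finSumFinEquiv.symm i with i | i <;> rcases finSumFinEquiv.symm j with j | j
    · exact hQ.1 i j
    · exact hd i
    · exact hr j
    · left; simp [Subsingleton.elim i j]
  · simp only [Matrix.submatrix_apply, h0]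
    rcases finSumFinEquiv.symm i with i | i
    · exact hQ.2 i
    · exact hr0

/-- For `M, N ∈ M_k{−1,1}`, `a, b, r ∈ {−1,1}^k` with `r 0 = 1` and `ε ∈ {−1,1}`,
the bordered (2k+1)×(2k+1) matrix `[[M, M, −a], [−N, N, −b], [ε·rᵀ, rᵀ, 1]]`
satisfies `|det B| ≤ 2^k · Θ_k · Θ_{k+1}`. -/
theorem bordered_det_le (k : ℕ) (hk : 0 < k) (M N : Matrix (Fin k) (Fin k) ℝ)
    (hM : M ∈ Mset k hk) (hN : N ∈ Mset k hk) (a b r : Fin k → ℝ)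
    (ha : ∀ i, a i = 1 ∨ a i = -1) (hb : ∀ i, b i = 1 ∨ b i = -1)
    (hr : ∀ i, r i = 1 ∨ r i = -1) (hr0 : r ⟨0, hk⟩ = 1)
    (ε : ℝ) (hε : ε = 1 ∨ ε = -1) :
    |(Matrix.fromBlocks (Matrix.fromBlocks M M (-N) N)
        (Matrix.of fun i (_ : Fin 1) => Sum.elim (fun s => -a s) (fun s => -b s) i)
        (Matrix.of fun (_ : Fin 1) w => Sum.elim (fun s => ε * r s) r w)
        (1 : Matrix (Fin 1) (Fin 1) ℝ)).det| ≤
      2 ^ k * Theta k hk * Theta (k + 1) k.succ_pos := by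
  have hna : ∀ i, -a i = 1 ∨ -a i = -1 := fun i => by rcases ha i with h | h <;> simp [h]
  have hnb : ∀ i, -b i = 1 ∨ -b i = -1 := fun i => by rcases hb i with h | h <;> simp [h]
  have fin : ∀ P Q : Matrix (Fin k) (Fin k) ℝ, P ∈ Mset k hk → Q ∈ Mset k hk →
      ∀ d : Fin k → ℝ, (∀ i, d i = 1 ∨ d i = -1) →
      2 ^ k * |P.det| * |(Matrix.fromBlocks Q (Matrix.of fun i (_ : Fin 1) => d i)
        (Matrix.of fun (_ : Fin 1) j => r j) (1 : Matrix (Fin 1) (Fin 1) ℝ)).det|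
        ≤ 2 ^ k * Theta k hk * Theta (k + 1) k.succ_pos := by
    intro P Q hP hQ d hd
    have h1 := le_Theta_aux hk P hP
    have h2 := bordered_aux hk Q hQ d r hd hr hr0
    have h3 := (abs_nonneg _).trans h1
    gcongr
  rcases hε with rfl | rfl
  · refine le_trans (le_of_eq ?_) (fin N M hN hM (fun s => -a s) hna)
    rw [← core_aux N M (fun s => -b s) (fun s => -a s) r 1 (Or.inl rfl),
      ← Matrix.abs_det_submatrix_equiv_equiv
        ((Equiv.sumAssoc _ _ _).symm.trans (Equiv.sumCongr (Equiv.sumComm _ _) (Equiv.refl _)))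
        (Equiv.sumAssoc _ _ _).symm]
    congr 2
    ext i j
    rcases i with i | i | i <;> rcases j with j | j | j <;> simp
  · refine le_trans (le_of_eq ?_) (fin M N hM hN (fun s => -b s) hnb)
    rw [← core_aux M N (fun s => -a s) (fun s => -b s) r (-1) (Or.inr rfl),
      ← Matrix.abs_det_submatrix_equiv_equiv
        (Equiv.sumAssoc _ _ _).symm (Equiv.sumAssoc _ _ _).symm]
    congr 2
    ext i j
    rcases i with i | i | i <;> rcases j with j | j | j <;> simp
end

section
/- Let k ≥ 1. Let M₀ be a k×k matrix, c₀, r₀ ∈ ℝ^k, and suppose the (k+1)×(k+1) bordered matrix B₀ = [[M₀, −c₀], [r₀ᵀ, 1]] belongs to M_{k+1}{−1,1} and satisfies |det B₀| = Θ_{k+1}. Let N₀ ∈ M_k{−1,1} satisfy |det N₀| = Θ_k. Then the (2k+1)×(2k+1) matrix D = [[M₀, M₀, −c₀], [−N₀, N₀, −c₀], [r₀ᵀ, r₀ᵀ, 1]] satisfies |det D| = 2^k · Θ_k · Θ_{k+1}. -/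
/-- If the bordered matrix `B₀ = [[M₀, −c₀], [r₀ᵀ, 1]]` lies in `M_{k+1}{−1,1}`
with `|det B₀| = Θ_{k+1}`, and `N₀ ∈ M_k{−1,1}` with `|det N₀| = Θ_k`, then the
(2k+1)×(2k+1) matrix `D = [[M₀, M₀, −c₀], [−N₀, N₀, −c₀], [r₀ᵀ, r₀ᵀ, 1]]`
satisfies `|det D| = 2^k · Θ_k · Θ_{k+1}`. -/
theorem bordered_det_optimal (k : ℕ) (hk : 0 < k)
    (M₀ N₀ : Matrix (Fin k) (Fin k) ℝ) (c₀ r₀ : Fin k → ℝ)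
    (hB₀mem : Matrix.reindex finSumFinEquiv finSumFinEquiv
        (Matrix.fromBlocks M₀ (Matrix.of fun i (_ : Fin 1) => -c₀ i)
          (Matrix.of fun (_ : Fin 1) s => r₀ s) (1 : Matrix (Fin 1) (Fin 1) ℝ))
        ∈ Mset (k + 1) k.succ_pos)
    (hB₀det : |(Matrix.fromBlocks M₀ (Matrix.of fun i (_ : Fin 1) => -c₀ i)
        (Matrix.of fun (_ : Fin 1) s => r₀ s) (1 : Matrix (Fin 1) (Fin 1) ℝ)).det|
        = Theta (k + 1) k.succ_pos)
    (hN₀ : N₀ ∈ Mset k hk) (hN₀det : |N₀.det| = Theta k hk) :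
    |(Matrix.fromBlocks (Matrix.fromBlocks M₀ M₀ (-N₀) N₀)
        (Matrix.of fun i (_ : Fin 1) => Sum.elim (fun s => -c₀ s) (fun s => -c₀ s) i)
        (Matrix.of fun (_ : Fin 1) w => Sum.elim r₀ r₀ w)
        (1 : Matrix (Fin 1) (Fin 1) ℝ)).det|
      = 2 ^ k * Theta k hk * Theta (k + 1) k.succ_pos := by
  rw [← hN₀det, ← hB₀det, Matrix.det_fromBlocks_one₂₂, Matrix.det_fromBlocks_one₂₂]
  set Q : Matrix (Fin k) (Fin k) ℝ := (Matrix.of fun i (_ : Fin 1) => -c₀ i) *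
    (Matrix.of fun (_ : Fin 1) s => r₀ s) with hQ
  have h1 : Matrix.fromBlocks M₀ M₀ (-N₀) N₀ -
      (Matrix.of fun i (_ : Fin 1) => Sum.elim (fun s => -c₀ s) (fun s => -c₀ s) i) *
        (Matrix.of fun (_ : Fin 1) w => Sum.elim r₀ r₀ w)
      = Matrix.fromBlocks (M₀ - Q) (M₀ - Q) (-N₀ - Q) (N₀ - Q) := by
    ext i j
    rcases i with i | i <;> rcases j with j | j <;> simp [hQ, Matrix.mul_apply]
  have h2 : Matrix.fromBlocks (M₀ - Q) (M₀ - Q) (-N₀ - Q) (N₀ - Q) *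
      Matrix.fromBlocks 1 (-1) 0 1
      = Matrix.fromBlocks (M₀ - Q) 0 (-N₀ - Q) ((2 : ℝ) • N₀) := by
    rw [Matrix.fromBlocks_multiply]
    congr 1
    · simp
    · simp
    · simp
    · simp only [two_smul, Matrix.mul_neg, Matrix.mul_one]
      abel
  have h3 := congrArg Matrix.det h2
  rw [Matrix.det_mul, Matrix.det_fromBlocks_zero₂₁, Matrix.det_fromBlocks_zero₁₂,
    Matrix.det_smul] at h3
  simp only [Matrix.det_one, mul_one, Fintype.card_fin] at h3
  rw [h1, h3, abs_mul, abs_mul, abs_of_pos (by positivity : (0 : ℝ) < 2 ^ k)]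
  ring
end

section
/- Let k ≥ 1. The maximum of |det B| over all (2k+1)×(2k+1) matrices of the form B = [[M, M, −a], [−N, N, −b], [ε·rᵀ, rᵀ, 1]], where M, N ∈ M_k{−1,1}, a, b ∈ {−1,1}^k, r ∈ {−1,1}^k with r_1 = 1, and ε ∈ {−1,1}, equals 2^k · Θ_k · Θ_{k+1}; in particular this maximum is attained by some such matrix. -/
open Matrix in
lemma aux_det {k : ℕ} (K : Matrix (Fin k ⊕ Fin 1) (Fin k ⊕ Fin 1) ℝ)
    (R : Matrix (Fin k) (Fin k ⊕ Fin 1) ℝ) (E : Matrix (Fin k ⊕ Fin 1) (Fin k) ℝ)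
    (N : Matrix (Fin k) (Fin k) ℝ) :
    (Matrix.fromBlocks K (K * E) R (R * E + (2 : ℝ) • N)).det = 2 ^ k * N.det * K.det := by
  have h : Matrix.fromBlocks K (K * E) R (R * E + (2 : ℝ) • N)
      = Matrix.fromBlocks K 0 R ((2 : ℝ) • N) * Matrix.fromBlocks 1 E 0 1 := by
    simp [Matrix.fromBlocks_multiply]
  rw [h, Matrix.det_mul, Matrix.det_fromBlocks_zero₁₂, Matrix.det_fromBlocks_zero₂₁,
    Matrix.det_smul]
  simp
  ring

/-- Moves the last coordinate next to the first block. -/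
def auxE (k : ℕ) : (Fin k ⊕ Fin 1) ⊕ Fin k ≃ (Fin k ⊕ Fin k) ⊕ Fin 1 where
  toFun := Sum.elim (Sum.elim (fun i => .inl (.inl i)) .inr) (fun i => .inl (.inr i))
  invFun := Sum.elim (Sum.elim (fun i => .inl (.inl i)) .inr) (fun i => .inl (.inr i))
  left_inv := by rintro ((i | i) | i) <;> rfl
  right_inv := by rintro ((i | i) | i) <;> rfl

/-- Moves the last coordinate next to the second block. -/
def auxF (k : ℕ) : (Fin k ⊕ Fin 1) ⊕ Fin k ≃ (Fin k ⊕ Fin k) ⊕ Fin 1 where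
  toFun := Sum.elim (Sum.elim (fun i => .inl (.inr i)) .inr) (fun i => .inl (.inl i))
  invFun := Sum.elim (Sum.elim .inr (fun i => .inl (.inl i))) (fun i => .inl (.inr i))
  left_inv := by rintro ((i | i) | i) <;> rfl
  right_inv := by rintro ((i | i) | i) <;> rfl

/-- The bordered matrix. -/
def auxB {k : ℕ} (M N : Matrix (Fin k) (Fin k) ℝ) (a b r : Fin k → ℝ) (ε : ℝ) :
    Matrix ((Fin k ⊕ Fin k) ⊕ Fin 1) ((Fin k ⊕ Fin k) ⊕ Fin 1) ℝ :=
  Matrix.fromBlocks (Matrix.fromBlocks M M (-N) N)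
            (Matrix.of fun i (_ : Fin 1) =>
              Sum.elim (fun s => -a s) (fun s => -b s) i)
            (Matrix.of fun (_ : Fin 1) w => Sum.elim (fun s => ε * r s) r w)
            (1 : Matrix (Fin 1) (Fin 1) ℝ)

/-- The small bordered matrix. -/
def auxK {k : ℕ} (M : Matrix (Fin k) (Fin k) ℝ) (a r : Fin k → ℝ) :
    Matrix (Fin k ⊕ Fin 1) (Fin k ⊕ Fin 1) ℝ :=
  Matrix.fromBlocks M (Matrix.of fun i _ => -a i) (Matrix.of fun _ j => r j) 1

lemma auxB_one {k : ℕ} (M N : Matrix (Fin k) (Fin k) ℝ) (a b r : Fin k → ℝ) :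
    |(auxB M N a b r 1).det| = 2 ^ k * |N.det| * |(auxK M a r).det| := by
  have h : (auxB M N a b r 1).submatrix (auxE k) (auxE k) =
      Matrix.fromBlocks (auxK M a r) (auxK M a r * Matrix.fromRows (1 : Matrix (Fin k) (Fin k) ℝ) (0 : Matrix (Fin 1) (Fin k) ℝ))
        (Matrix.fromCols (-N) (Matrix.of fun i (_ : Fin 1) => -b i))
        (Matrix.fromCols (-N) (Matrix.of fun i (_ : Fin 1) => -b i) * Matrix.fromRows (1 : Matrix (Fin k) (Fin k) ℝ) (0 : Matrix (Fin 1) (Fin k) ℝ)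
          + (2 : ℝ) • N) := by
    have h1 : auxK M a r * Matrix.fromRows (1 : Matrix (Fin k) (Fin k) ℝ) (0 : Matrix (Fin 1) (Fin k) ℝ)
        = Matrix.fromRows M (Matrix.of fun _ j => r j) := by
      rw [auxK, ← Matrix.fromRows_fromCols_eq_fromBlocks, Matrix.fromRows_mul,
        Matrix.fromCols_mul_fromRows, Matrix.fromCols_mul_fromRows]
      simp
    rw [h1, Matrix.fromCols_mul_fromRows]
    ext ((i | i) | i) ((j | j) | j) <;> simp [auxB, auxE, auxK]
    ring
  rw [← Matrix.abs_det_submatrix_equiv_equiv (auxE k) (auxE k), h, aux_det, abs_mul, abs_mul]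
  simp

lemma auxB_neg {k : ℕ} (M N : Matrix (Fin k) (Fin k) ℝ) (a b r : Fin k → ℝ) :
    |(auxB M N a b r (-1)).det| = 2 ^ k * |M.det| * |(auxK N b r).det| := by
  have h : (auxB M N a b r (-1)).submatrix (auxF k) (auxE k) =
      (auxB N M b a r 1).submatrix (auxE k) (auxE k) *
        Matrix.fromBlocks (Matrix.fromBlocks (-1) 0 0 1) 0 0 1 := by
    have h2 : (auxB N M b a r 1).submatrix (auxE k) (auxE k) = 
      Matrix.fromBlocks (auxK N b r) (Matrix.fromRows N (Matrix.of fun _ j => r j))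
        (Matrix.fromCols (-M) (Matrix.of fun i _ => -a i)) M := by
      ext ((i | i) | i) ((j | j) | j) <;> simp [auxB, auxE, auxK]
    rw [h2, Matrix.fromBlocks_multiply, auxK, Matrix.fromBlocks_multiply,
      ← Matrix.fromRows_fromCols_eq_fromBlocks (-1 : Matrix (Fin k) (Fin k) ℝ),
      Matrix.fromCols_mul_fromRows]
    ext ((i | i) | i) ((j | j) | j) <;> simp [auxB, auxE, auxF, Matrix.mul_fromCols]
  rw [← Matrix.abs_det_submatrix_equiv_equiv (auxF k) (auxE k), h, Matrix.det_mul, abs_mul,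
    Matrix.abs_det_submatrix_equiv_equiv, auxB_one, Matrix.det_fromBlocks_zero₂₁,
    Matrix.det_fromBlocks_zero₂₁, Matrix.det_neg]
  simp

lemma Mset_finite (k : ℕ) (hk : 0 < k) : (Mset k hk).Finite := by
  refine Set.Finite.subset (Set.Finite.pi (t := fun _ : Fin k =>
    Set.pi Set.univ (fun _ : Fin k => ({1, -1} : Set ℝ)))
    (fun _ => Set.Finite.pi (fun _ => by simp))) ?_
  intro A hA i _ j _
  simpa using hA.1 i j

lemma le_Theta {k : ℕ} {hk : 0 < k} {A : Matrix (Fin k) (Fin k) ℝ} (hA : A ∈ Mset k hk) :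
    |A.det| ≤ Theta k hk :=
  le_csSup ((Mset_finite k hk).image _).bddAbove ⟨A, hA, rfl⟩

lemma exists_Theta (k : ℕ) (hk : 0 < k) : ∃ A ∈ Mset k hk, |A.det| = Theta k hk :=
  Set.Nonempty.csSup_mem (Set.Nonempty.image _ (s := Mset k hk)
    ⟨Matrix.of fun _ _ => 1, fun _ _ => Or.inl rfl, fun _ => rfl⟩)
    ((Mset_finite k hk).image _)

lemma auxK_le {k : ℕ} {hk : 0 < k} {M : Matrix (Fin k) (Fin k) ℝ} (hM : M ∈ Mset k hk)
    {a r : Fin k → ℝ} (ha : ∀ i, a i = 1 ∨ a i = -1) (hr : ∀ i, r i = 1 ∨ r i = -1)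
    (hr0 : r ⟨0, hk⟩ = 1) : |(auxK M a r).det| ≤ Theta (k + 1) k.succ_pos := by
  rw [← Matrix.abs_det_submatrix_equiv_equiv finSumFinEquiv.symm finSumFinEquiv.symm]
  apply le_Theta
  constructor
  · intro i j
    obtain ⟨i, rfl⟩ := finSumFinEquiv.surjective i
    obtain ⟨j, rfl⟩ := finSumFinEquiv.surjective j
    simp only [Matrix.submatrix_apply, Equiv.symm_apply_apply]
    rcases i with i | i <;> rcases j with j | j <;> simp only [auxK, Matrix.fromBlocks_apply₁₁,
      Matrix.fromBlocks_apply₁₂, Matrix.fromBlocks_apply₂₁, Matrix.fromBlocks_apply₂₂,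
      Matrix.of_apply]
    · exact hM.1 i j
    · rcases ha i with h | h <;> simp [h]
    · exact hr j
    · left; rw [Subsingleton.elim i j]; simp
  · intro i
    obtain ⟨i, rfl⟩ := finSumFinEquiv.surjective i
    have : (⟨0, k.succ_pos⟩ : Fin (k + 1)) = finSumFinEquiv (.inl ⟨0, hk⟩) := by
      ext; simp
    rw [this]
    simp only [Matrix.submatrix_apply, Equiv.symm_apply_apply]
    rcases i with i | i
    · exact hM.2 i
    · exact hr0

lemma exists_auxK (k : ℕ) (hk : 0 < k) : ∃ M ∈ Mset k hk, ∃ a r : Fin k → ℝ,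
    (∀ i, a i = 1 ∨ a i = -1) ∧ (∀ i, r i = 1 ∨ r i = -1) ∧ r ⟨0, hk⟩ = 1 ∧
    |(auxK M a r).det| = Theta (k + 1) k.succ_pos := by
  obtain ⟨A, hA, hdet⟩ := exists_Theta (k + 1) k.succ_pos
  set s : ℝ := A (Fin.last k) (Fin.last k) with hs
  have hs1 : s = 1 ∨ s = -1 := hA.1 _ _
  have hss : s * s = 1 := by rcases hs1 with h | h <;> rw [h] <;> norm_num
  have habs : |s| = 1 := by rcases hs1 with h | h <;> rw [h] <;> norm_num
  refine ⟨Matrix.of fun i j => A i.castSucc j.castSucc, ⟨fun i j => hA.1 _ _, fun i => hA.2 _⟩,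
    fun i => -(A i.castSucc (Fin.last k) * s), fun j => A (Fin.last k) j.castSucc,
    ?_, fun i => hA.1 _ _, hA.2 _, ?_⟩
  · intro i
    rcases hs1 with h | h <;> rcases hA.1 i.castSucc (Fin.last k) with h' | h' <;>
      simp [h, h']
  · have h : auxK (Matrix.of fun i j => A i.castSucc j.castSucc)
        (fun i => -(A i.castSucc (Fin.last k) * s)) (fun j => A (Fin.last k) j.castSucc)
        = A.submatrix finSumFinEquiv finSumFinEquiv *
          Matrix.fromBlocks 1 0 0 (s • (1 : Matrix (Fin 1) (Fin 1) ℝ)) := by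
      have h2 : A.submatrix finSumFinEquiv finSumFinEquiv =
          Matrix.fromBlocks (Matrix.of fun i j => A i.castSucc j.castSucc)
            (Matrix.of fun i _ => A i.castSucc (Fin.last k)) (Matrix.of fun _ j => A (Fin.last k) j.castSucc)
            (Matrix.of fun (_ _ : Fin 1) => s) := by
        ext (i | i) (j | j)
        · rfl
        · rw [Subsingleton.elim j 0]; rfl
        · rw [Subsingleton.elim i 0]; rfl
        · rw [Subsingleton.elim j 0, Subsingleton.elim i 0]; rfl
      rw [h2, Matrix.fromBlocks_multiply]
      ext (i | i) (j | j) <;> simp [auxK, mul_comm]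
      rw [Subsingleton.elim i j]; simp [hss]
    rw [h, Matrix.det_mul, abs_mul, Matrix.abs_det_submatrix_equiv_equiv, hdet,
      Matrix.det_fromBlocks_zero₂₁]
    simp [habs]


/-- The maximum of `|det B|` over all bordered (2k+1)×(2k+1) matrices
`B = [[M, M, −a], [−N, N, −b], [ε·rᵀ, rᵀ, 1]]` with `M, N ∈ M_k{−1,1}`,
`a, b, r ∈ {−1,1}^k`, `r 0 = 1` and `ε ∈ {−1,1}`, equals `2^k · Θ_k · Θ_{k+1}`,
and this maximum is attained. -/
theorem bordered_det_isGreatest (k : ℕ) (hk : 0 < k) :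
    IsGreatest {x : ℝ | ∃ M ∈ Mset k hk, ∃ N ∈ Mset k hk, ∃ a b r : Fin k → ℝ,
        (∀ i, a i = 1 ∨ a i = -1) ∧ (∀ i, b i = 1 ∨ b i = -1) ∧
        (∀ i, r i = 1 ∨ r i = -1) ∧ r ⟨0, hk⟩ = 1 ∧
        ∃ ε : ℝ, (ε = 1 ∨ ε = -1) ∧
          x = |(Matrix.fromBlocks (Matrix.fromBlocks M M (-N) N)
            (Matrix.of fun i (_ : Fin 1) =>
              Sum.elim (fun s => -a s) (fun s => -b s) i)
            (Matrix.of fun (_ : Fin 1) w => Sum.elim (fun s => ε * r s) r w)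
            (1 : Matrix (Fin 1) (Fin 1) ℝ)).det|}
      (2 ^ k * Theta k hk * Theta (k + 1) k.succ_pos) := by


  constructor
  · obtain ⟨N, hN, hNd⟩ := exists_Theta k hk
    obtain ⟨M, hM, a, r, ha, hr, hr0, hd⟩ := exists_auxK k hk
    refine ⟨M, hM, N, hN, a, fun _ => 1, r, ha, fun _ => Or.inl rfl, hr, hr0, 1, Or.inl rfl, ?_⟩
    rw [← hNd, ← hd]
    exact (auxB_one M N a (fun _ => 1) r).symm
  · rintro x ⟨M, hM, N, hN, a, b, r, ha, hb, hr, hr0, ε, hε, rfl⟩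
    change |(auxB M N a b r ε).det| ≤ _
    rcases hε with rfl | rfl
    · rw [auxB_one]
      have h1 := le_Theta hN
      have h2 := auxK_le hM ha hr hr0
      have h3 := (abs_nonneg N.det).trans h1
      gcongr
    · rw [auxB_neg]
      have h1 := le_Theta hM
      have h2 := auxK_le hN hb hr hr0
      have h3 := (abs_nonneg M.det).trans h1
      gcongr
end

section
/- Let k ≥ 1 and let F₁, …, F_k ∈ {−1,1}^{2k} be column vectors. Let D be the 2k×2k real matrix whose columns are F₁, …, F_k followed by F₁⊙F₁, F₁⊙F₂, …, F₁⊙F_k, where ⊙ denotes the entrywise (Schür) product. If D is invertible, then F₁ is balanced, i.e. the number of indices i with F₁(i) = 1 equals k. -/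
/-- Let `F 0, …, F (k-1) ∈ {−1,1}^{2k}` and let `D` be the 2k×2k matrix whose
columns are `F 0, …, F (k-1)` followed by the Schür products
`F 0 ⊙ F 0, F 0 ⊙ F 1, …, F 0 ⊙ F (k-1)`. If `D` is invertible then `F 0` is
balanced: exactly `k` of its entries equal 1. -/
theorem balanced_of_invertible (k : ℕ) (hk : 0 < k)
    (F : Fin k → (Fin (2 * k) → ℝ)) (hF : ∀ c i, F c i = 1 ∨ F c i = -1)
    (D : Matrix (Fin (2 * k)) (Fin (2 * k)) ℝ)
    (hD : ∀ i j, D i j =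
      Sum.elim (fun c => F c i) (fun c => F ⟨0, hk⟩ i * F c i)
        (finSumFinEquiv.symm (finCongr (two_mul k) j)))
    (hinv : IsUnit D) :
    (Finset.univ.filter fun i => F ⟨0, hk⟩ i = 1).card = k := by
  classical
  set F0 : Fin (2 * k) → ℝ := F ⟨0, hk⟩ with hF0
  have hsq : ∀ i, F0 i * F0 i = 1 := by
    intro i
    rcases hF ⟨0, hk⟩ i with h | h <;> simp [hF0, h]
  let e : Fin (2 * k) ≃ Fin k ⊕ Fin k := (finCongr (two_mul k)).trans finSumFinEquiv.symm
  let σ : Fin (2 * k) → Fin (2 * k) := fun j => e.symm (e j).swap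
  have hD' : ∀ i j, D i j = Sum.elim (fun c => F c i) (fun c => F0 i * F c i) (e j) := hD
  have hMD : Matrix.diagonal F0 * D = D.submatrix id σ := by
    ext i j
    rw [Matrix.diagonal_mul, Matrix.submatrix_apply, hD', hD']
    simp only [σ, Equiv.apply_symm_apply, id]
    rcases e j with c | c
    · simp
    · simp [← mul_assoc, hsq]
  have hdet : IsUnit D.det := (Matrix.isUnit_iff_isUnit_det D).1 hinv
  have htr : (Matrix.diagonal F0).trace = 0 := by
    have h1 : (Matrix.diagonal F0).trace = (D⁻¹ * (Matrix.diagonal F0 * D)).trace := by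
      rw [Matrix.trace_mul_comm, Matrix.mul_assoc, Matrix.mul_nonsing_inv _ hdet, Matrix.mul_one]
    have h2 : D⁻¹ * D.submatrix id σ = (1 : Matrix _ _ ℝ).submatrix id σ := by
      rw [← Matrix.nonsing_inv_mul _ hdet]
      ext i j
      simp [Matrix.mul_apply]
    rw [h1, hMD, h2, Matrix.trace]
    apply Finset.sum_eq_zero
    intro j _
    have hne : j ≠ σ j := by
      intro h
      have h' : e j = (e j).swap := by
        conv_lhs => rw [h]
        simp [σ]
      revert h'
      rcases e j with c | c <;> simp
    simp [Matrix.one_apply, hne]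
  rw [Matrix.trace_diagonal] at htr
  have h3 : ∀ i, F0 i = 2 * (if F0 i = 1 then (1 : ℝ) else 0) - 1 := by
    intro i
    rcases hF ⟨0, hk⟩ i with h | h
    · have h : F0 i = 1 := h
      rw [if_pos h, h]; norm_num
    · have h : F0 i = -1 := h
      rw [if_neg (by rw [h]; norm_num), h]; norm_num
  rw [Finset.sum_congr rfl (fun i _ => h3 i), Finset.sum_sub_distrib, ← Finset.mul_sum,
    Finset.sum_boole] at htr
  simp only [Finset.sum_const, Finset.card_univ, Fintype.card_fin, nsmul_eq_mul, mul_one] at htr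
  push_cast at htr
  have h4 : (((Finset.univ.filter fun i => F0 i = 1).card : ℕ) : ℝ) = (k : ℝ) := by linarith
  exact_mod_cast h4
end
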